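/- arXiv:0803.1641 — 2 statements merged into one kernel-verified Lean document; each statement's English description precedes it below -/
import Mathlib

section
/- Let A and B be countable torsion abelian groups and let n ≥ 1. If the direct sum of 2^n copies of A is isomorphic to the direct sum of 2^n copies of B, then A is isomorphic to B. -/
/-!
A countable torsion group `A` is determined by its Ulm invariants, the orders of
`(p^θ A)[p] / (p^(θ+1) A)[p]` together with the order of `(p^∞ A)[p]`. The invariants of `A^k` are
the `k`-th powers of those of `A`, where infinity is its own power, so they determine those of `A`.

Ulm's theorem is a back-and-forth argument on finite partial isomorphisms `Γ ⊆ A × B` that preserve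
all heights. It can be run for all primes at once: adjoining `(x, w)` with `p (x, w) ∈ Γ` is
harmless for heights at `q ≠ p`, since multiplication by `p` does not change them. To extend `Γ` to
such an `x`, replace it by an element of maximal `p`-height `θ` in its coset modulo the domain of
`Γ`. A partner `w` must have height `θ`, be maximal in its coset as well, and satisfy
`(p x, p w) ∈ Γ`. Every solution of height at least `θ` is maximal unless some `p (x + d)`, with `d`
in the domain of `Γ` and `x + d` of height `θ`, is `p` times an element of height greater than `θ`.
In that case a partner exists because the order of `(p^θ A)[p]` modulo elements of height greater
than `θ` and modulo the domain of `Γ` agrees with the corresponding order for `B`: it is the Ulm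
invariant divided by a finite factor that only depends on `Γ`.
-/

namespace Ulm

open AddSubgroup
open scoped Pointwise

section Height

/-- The subgroup `p^θ A` of elements of `p`-height at least `θ`: `p^0 A = A`, and `p^θ A` is the
intersection of the `p (p^β A)` for `β < θ`. The index `⊤` gives `p^∞ A`, the largest `p`-divisible
subgroup. Ordinals in `Type` suffice for groups that are small, in particular for countable ones. -/
noncomputable def heightGE (A : Type*) [AddCommGroup A] (p : ℕ) (θ : WithTop Ordinal.{0}) :
    AddSubgroup A :=
  ⨅ β < θ, p • heightGE A p β
termination_by wellFounded_lt.wrap θ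

/-- The subgroup of elements of `p`-height greater than `θ`, where only `0` is taken to have height
greater than `⊤`. -/
noncomputable def heightGT (A : Type*) [AddCommGroup A] (p : ℕ) (θ : WithTop Ordinal.{0}) :
    AddSubgroup A :=
  if θ = ⊤ then ⊥ else p • heightGE A p θ

/-- The `θ`-th Ulm invariant of `A` at `p`: the order of the subgroup of `p^θ A` killed by `p`,
modulo the elements of height greater than `θ`; for `θ = ⊤` it measures the `p`-divisible part.
All infinite orders are recorded as `0`; this loses nothing when `A` is countable. -/
noncomputable def ulmInvariant (A : Type*) [AddCommGroup A] (p : ℕ) (θ : WithTop Ordinal.{0}) :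
    ℕ :=
  (heightGT A p θ).relIndex (heightGE A p θ ⊓ torsionBy A p)

variable {A : Type*} [AddCommGroup A] {p q : ℕ} {θ β : WithTop Ordinal.{0}}

theorem mem_heightGE_iff {x : A} : x ∈ heightGE A p θ ↔ ∀ β < θ, x ∈ p • heightGE A p β := by
  rw [heightGE]
  simp only [mem_iInf]

theorem heightGE_antitone : Antitone (heightGE A p) := fun _ _ h _ hx ↦
  mem_heightGE_iff.2 fun γ hγ ↦ mem_heightGE_iff.1 hx γ (hγ.trans_le h)

theorem heightGT_top : heightGT A p ⊤ = ⊥ := if_pos rfl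

theorem heightGT_of_ne_top (hθ : θ ≠ ⊤) : heightGT A p θ = p • heightGE A p θ := if_neg hθ

theorem heightGE_succ_of_ne_top (hθ : θ ≠ ⊤) :
    heightGE A p (Order.succ θ) = p • heightGE A p θ := by
  ext x
  have := Order.lt_succ_of_not_isMax (mt isMax_iff_eq_top.1 hθ)
  refine ⟨fun hx ↦ mem_heightGE_iff.1 hx θ this, fun hx ↦ mem_heightGE_iff.2 fun β hβ ↦ ?_⟩
  exact map_mono (heightGE_antitone (Order.le_of_lt_succ hβ)) hx

theorem heightGE_le_heightGT (h : θ < β) : heightGE A p β ≤ heightGT A p θ := fun _ hx ↦ by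
  rw [heightGT_of_ne_top h.ne_top]
  exact mem_heightGE_iff.1 hx θ h

theorem heightGT_le_heightGE : heightGT A p θ ≤ heightGE A p θ := by
  rcases eq_or_ne θ ⊤ with rfl | hθ
  · exact heightGT_top.trans_le bot_le
  · rw [heightGT_of_ne_top hθ, ← heightGE_succ_of_ne_top hθ]
    exact heightGE_antitone (Order.le_succ θ)

theorem heightGT_antitone : Antitone (heightGT A p) := fun θ β h ↦ by
  rcases h.eq_or_lt with rfl | h
  · exact le_rfl
  · exact heightGT_le_heightGE.trans (heightGE_le_heightGT h)

theorem heightGE_le_of_eq {α : WithTop Ordinal.{0}} (hαβ : α < β)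
    (h : heightGE A p α = heightGE A p β) :
    heightGE A p α ≤ heightGE A p θ := by
  induction θ using WellFoundedLT.induction with
  | _ θ ih =>
    refine fun x hx ↦ mem_heightGE_iff.2 fun γ hγ ↦ map_mono (ih γ hγ) ?_
    exact mem_heightGE_iff.1 (h ▸ hx) α hαβ

theorem smul_heightGE_top [Small.{0} A] : p • heightGE A p ⊤ = heightGE A p ⊤ := by
  -- A decreasing family indexed by all ordinals repeats a value, and is constant from there on.
  have : Small.{0} (AddSubgroup A) := small_of_injective SetLike.coe_injective
  obtain ⟨α, β, hαβ, h⟩ : ∃ α β : Ordinal.{0}, α < β ∧ heightGE A p α = heightGE A p β := by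
    obtain ⟨α, β, h, hne⟩ := Function.not_injective_iff.1
      (not_injective_of_ordinal fun α : Ordinal.{0} ↦ heightGE A p α)
    rcases hne.lt_or_gt with hlt | hlt
    exacts [⟨α, β, hlt, h⟩, ⟨β, α, hlt, h.symm⟩]
  have hαβ' : (α : WithTop Ordinal.{0}) < β := WithTop.coe_lt_coe.2 hαβ
  refine le_antisymm (fun x ⟨y, hy, hyx⟩ ↦ hyx ▸ nsmul_mem hy p) ?_
  calc
    heightGE A p ⊤ ≤ heightGE A p β := heightGE_antitone le_top
    _ ≤ p • heightGE A p α := fun x hx ↦ mem_heightGE_iff.1 hx α hαβ'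
    _ ≤ p • heightGE A p ⊤ := map_mono (heightGE_le_of_eq hαβ' h)

theorem smul_heightGE [Small.{0} A] : p • heightGE A p θ = heightGE A p (Order.succ θ) := by
  rcases eq_or_ne θ ⊤ with rfl | hθ
  · rw [Order.succ_top, smul_heightGE_top]
  · rw [heightGE_succ_of_ne_top hθ]

theorem exists_height {x : A} (p : ℕ) (hx : x ≠ 0) :
    ∃ θ, x ∈ heightGE A p θ ∧ x ∉ heightGT A p θ := by
  by_contra! h
  have hmem (θ) : x ∈ heightGE A p θ := by
    induction θ using WellFoundedLT.induction with
    | _ θ ih =>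
      refine mem_heightGE_iff.2 fun β hβ ↦ ?_
      rw [← heightGT_of_ne_top hβ.ne_top]
      exact h β (ih β hβ)
  exact hx (by simpa [heightGT_top] using h ⊤ (hmem ⊤))

theorem exists_add_mem_heightGE_of_notMem (p : ℕ) (S : AddSubgroup A) [Finite S] {x : A}
    (hx : x ∉ S) :
    ∃ θ, ∃ s ∈ S, x + s ∈ heightGE A p θ ∧ ∀ t ∈ S, x + t ∉ heightGT A p θ := by
  have hne (s : S) : x + s ≠ 0 := fun h ↦ hx (eq_neg_of_add_eq_zero_left h ▸ neg_mem s.2)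
  choose ht hGE hGT using fun s ↦ exists_height p (hne s)
  obtain ⟨m, hm⟩ := Finite.exists_max ht
  exact ⟨ht m, m, m.2, hGE m, fun t hts h ↦ hGT ⟨t, hts⟩ (heightGT_antitone (hm ⟨t, hts⟩) h)⟩

theorem mem_iff_zsmul_mem_and_zsmul_mem {m n : ℤ} (hmn : IsCoprime m n) {P : AddSubgroup A}
    {x : A} : x ∈ P ↔ m • x ∈ P ∧ n • x ∈ P := by
  refine ⟨fun h ↦ ⟨zsmul_mem h m, zsmul_mem h n⟩, fun ⟨hm, hn⟩ ↦ ?_⟩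
  obtain ⟨a, b, hab⟩ := hmn
  rw [← one_zsmul x, ← hab, add_zsmul, mul_zsmul, mul_zsmul]
  exact add_mem (zsmul_mem hm a) (zsmul_mem hn b)

theorem nsmul_mem_heightGE_iff (hqp : q.Coprime p) {x : A} :
    q • x ∈ heightGE A p θ ↔ x ∈ heightGE A p θ := by
  refine ⟨fun hx ↦ ?_, fun hx ↦ nsmul_mem hx q⟩
  induction θ using WellFoundedLT.induction with
  | _ θ ih =>
    refine mem_heightGE_iff.2 fun β hβ ↦ ?_
    have hxβ : x ∈ heightGE A p β := ih β hβ (heightGE_antitone hβ.le hx)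
    refine (mem_iff_zsmul_mem_and_zsmul_mem (Nat.isCoprime_iff_coprime.2 hqp)).2 ?_
    rw [natCast_zsmul, natCast_zsmul]
    exact ⟨mem_heightGE_iff.1 hx β hβ, smul_mem_pointwise_smul x p _ hxβ⟩

end Height

section UlmInvariant

variable {A B : Type*} [AddCommGroup A] [AddCommGroup B] {p : ℕ} {θ : WithTop Ordinal.{0}}

theorem map_mem_heightGE (f : A →+ B) {x : A} (hx : x ∈ heightGE A p θ) :
    f x ∈ heightGE B p θ := by
  induction θ using WellFoundedLT.induction generalizing x with
  | _ θ ih =>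
    refine mem_heightGE_iff.2 fun β hβ ↦ ?_
    obtain ⟨y, hy, rfl⟩ := mem_heightGE_iff.1 hx β hβ
    exact ⟨f y, ih β hβ hy, (map_nsmul f p y).symm⟩

theorem map_mem_heightGT (f : A →+ B) {x : A} (hx : x ∈ heightGT A p θ) :
    f x ∈ heightGT B p θ := by
  rcases eq_or_ne θ ⊤ with rfl | hθ
  · rw [heightGT_top, mem_bot] at hx ⊢
    rw [hx, map_zero]
  · rw [heightGT_of_ne_top hθ] at hx ⊢
    obtain ⟨y, hy, rfl⟩ := hx
    exact ⟨f y, map_mem_heightGE f hy, (map_nsmul f p y).symm⟩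

theorem map_mem_heightGE_iff (e : A ≃+ B) {x : A} :
    e x ∈ heightGE B p θ ↔ x ∈ heightGE A p θ :=
  ⟨fun h ↦ by simpa using map_mem_heightGE (e.symm : B →+ A) h, map_mem_heightGE (e : A →+ B)⟩

theorem map_mem_heightGT_iff (e : A ≃+ B) {x : A} :
    e x ∈ heightGT B p θ ↔ x ∈ heightGT A p θ :=
  ⟨fun h ↦ by simpa using map_mem_heightGT (e.symm : B →+ A) h, map_mem_heightGT (e : A →+ B)⟩

theorem ulmInvariant_congr (e : A ≃+ B) : ulmInvariant A p θ = ulmInvariant B p θ := by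
  have hGT : heightGT A p θ = (heightGT B p θ).comap (e : A →+ B) :=
    ext fun _ ↦ (map_mem_heightGT_iff e).symm
  have hsocle : heightGE A p θ ⊓ torsionBy A p =
      (heightGE B p θ ⊓ torsionBy B p).comap (e : A →+ B) := by
    ext x
    simp [map_mem_heightGE_iff, ← map_nsmul]
  rw [ulmInvariant, hGT, relIndex_comap, hsocle, map_comap_eq_self_of_surjective e.surjective,
    ulmInvariant]

theorem heightGE_pi {ι : Type*} :
    heightGE (ι → A) p θ = AddSubgroup.pi Set.univ fun _ ↦ heightGE A p θ := by
  induction θ using WellFoundedLT.induction with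
  | _ θ ih =>
    refine le_antisymm
      (fun x hx i _ ↦ map_mem_heightGE (Pi.evalAddMonoidHom (fun _ ↦ A) i) hx) fun x hx ↦ ?_
    refine mem_heightGE_iff.2 fun β hβ ↦ ?_
    choose y hy hyx using fun i ↦ mem_heightGE_iff.1 (hx i trivial) β hβ
    exact ⟨y, ih β hβ ▸ fun i _ ↦ hy i, funext hyx⟩

theorem heightGT_pi {ι : Type*} :
    heightGT (ι → A) p θ = AddSubgroup.pi Set.univ fun _ ↦ heightGT A p θ := by
  refine le_antisymm
    (fun x hx i _ ↦ map_mem_heightGT (Pi.evalAddMonoidHom (fun _ ↦ A) i) hx) fun x hx ↦ ?_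
  rcases eq_or_ne θ ⊤ with rfl | hθ
  · simp only [heightGT_top, pi_bot] at hx ⊢
    exact hx
  · simp only [heightGT_of_ne_top hθ] at hx ⊢
    choose y hy hyx using fun i ↦ (hx i trivial : x i ∈ p • heightGE A p θ)
    exact ⟨y, heightGE_pi.ge fun i _ ↦ hy i, funext hyx⟩

theorem relIndex_pi_const {ι : Type*} [Fintype ι] (H K : AddSubgroup A) :
    (AddSubgroup.pi Set.univ fun _ : ι ↦ H).relIndex (AddSubgroup.pi Set.univ fun _ ↦ K) =
      H.relIndex K ^ Fintype.card ι := by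
  let φ : (ι → K) →+ (ι → A) := AddMonoidHom.compLeft K.subtype ι
  have hrange : AddSubgroup.pi Set.univ (fun _ : ι ↦ K) = φ.range := by
    ext x
    exact ⟨fun h ↦ ⟨fun i ↦ ⟨x i, h i trivial⟩, rfl⟩, by rintro ⟨y, rfl⟩ i _; exact (y i).2⟩
  have hcomap : (AddSubgroup.pi Set.univ fun _ : ι ↦ H).comap φ =
      AddSubgroup.pi Set.univ fun _ ↦ H.addSubgroupOf K := rfl
  rw [hrange, ← index_comap, hcomap, index_pi, Finset.prod_const, Finset.card_univ, relIndex]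

theorem ulmInvariant_pi {ι : Type*} [Fintype ι] :
    ulmInvariant (ι → A) p θ = ulmInvariant A p θ ^ Fintype.card ι := by
  have hsocle : heightGE (ι → A) p θ ⊓ torsionBy (ι → A) p =
      AddSubgroup.pi Set.univ fun _ ↦ heightGE A p θ ⊓ torsionBy A p := by
    ext x
    simp [heightGE_pi, mem_pi, funext_iff, forall_and]
  rw [ulmInvariant, hsocle, heightGT_pi, relIndex_pi_const, ulmInvariant]

end UlmInvariant

section Counting

variable {A B : Type*} [AddCommGroup A] [AddCommGroup B]

theorem relIndex_inf_sup_mul_relIndex (H S E : AddSubgroup A) :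
    H.relIndex (S ⊓ (H ⊔ E)) * (H ⊔ S).relIndex E = H.relIndex E := by
  have hmod : H ⊔ S ⊓ (H ⊔ E) = H ⊔ (H ⊔ S) ⊓ E := by
    rw [← sup_inf_assoc_of_le S le_sup_left, inf_comm _ E, ← sup_inf_assoc_of_le E le_sup_left,
      inf_comm]
  calc
    H.relIndex (S ⊓ (H ⊔ E)) * (H ⊔ S).relIndex E =
        H.relIndex ((H ⊔ S) ⊓ E) * (H ⊔ S).relIndex E := by
      rw [← relIndex_sup_left, hmod, relIndex_sup_left]
    _ = H.relIndex E := by rw [relIndex_inf_mul_relIndex, inf_eq_left.2 le_sup_left]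

theorem map_inf_comap (f : A →+ B) (K : AddSubgroup A) (E : AddSubgroup B) :
    (K ⊓ E.comap f).map f = K.map f ⊓ E :=
  SetLike.coe_injective (Set.image_inter_preimage f K E)

/-- `Γ` matches `P` with `Q`: a pair of `Γ` has its first coordinate in `P` exactly when it has its
second coordinate in `Q`. For `P = Q = ⊥` this says that `Γ` is the graph of an isomorphism between
its two projections. -/
def Respects (Γ : AddSubgroup (A × B)) (P : AddSubgroup A) (Q : AddSubgroup B) : Prop :=
  ∀ c ∈ Γ, c.1 ∈ P ↔ c.2 ∈ Q

variable {Γ : AddSubgroup (A × B)} {H E : AddSubgroup A} {H' E' : AddSubgroup B}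

theorem Respects.relIndex_map_inf (hH : Respects Γ H H') (hE : Respects Γ E E') :
    H.relIndex (Γ.map (AddMonoidHom.fst A B) ⊓ E) =
      H'.relIndex (Γ.map (AddMonoidHom.snd A B) ⊓ E') := by
  have hdom : Γ ⊓ E.comap (AddMonoidHom.fst A B) = Γ ⊓ E'.comap (AddMonoidHom.snd A B) :=
    ext fun c ↦ and_congr_right (hE c)
  have hpre : H.comap (AddMonoidHom.fst A B) ⊓ (Γ ⊓ E'.comap (AddMonoidHom.snd A B)) =
      H'.comap (AddMonoidHom.snd A B) ⊓ (Γ ⊓ E'.comap (AddMonoidHom.snd A B)) :=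
    ext fun c ↦ and_congr_left fun hc ↦ hH c hc.1
  rw [← map_inf_comap, ← map_inf_comap, hdom, ← relIndex_comap, ← relIndex_comap,
    ← inf_relIndex_right, hpre, inf_relIndex_right]

theorem Respects.relIndex_sup_map [Finite Γ] (hH : Respects Γ H H')
    (hE : Respects Γ (H ⊔ E) (H' ⊔ E')) (h : H.relIndex E = H'.relIndex E') :
    (H ⊔ Γ.map (AddMonoidHom.fst A B)).relIndex E =
      (H' ⊔ Γ.map (AddMonoidHom.snd A B)).relIndex E' := by
  set S := Γ.map (AddMonoidHom.fst A B)
  have : Finite S := Set.Finite.image _ (Set.toFinite (Γ : Set (A × B)))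
  have : Finite (S ⊓ (H ⊔ E) : AddSubgroup A) :=
    Finite.of_injective _ (inclusion_injective inf_le_left)
  -- Cancelling this factor is legitimate even if the other indices are infinite, hence `0`.
  have hpos : 0 < H.relIndex (S ⊓ (H ⊔ E)) :=
    Nat.pos_of_dvd_of_pos (relIndex_dvd_card _ _) Nat.card_pos
  refine Nat.eq_of_mul_eq_mul_left hpos ?_
  rw [relIndex_inf_sup_mul_relIndex, h, hH.relIndex_map_inf hE, relIndex_inf_sup_mul_relIndex]

theorem nsmul_mem_of_mem_sup_zmultiples {p : ℕ} {e c : A} {Γ : AddSubgroup A} (hpe : p • e ∈ Γ)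
    (hc : c ∈ Γ ⊔ zmultiples e) : p • c ∈ Γ := by
  obtain ⟨γ, hγ, _, ⟨k, rfl⟩, rfl⟩ := mem_sup.1 hc
  rw [nsmul_add, smul_comm]
  exact add_mem (nsmul_mem hγ p) (zsmul_mem hpe k)

theorem mem_or_exists_isCoprime_zsmul_sub_mem {p : ℕ} (hp : p.Prime) {e c : A}
    {Γ : AddSubgroup A} (hpe : p • e ∈ Γ) (hc : c ∈ Γ ⊔ zmultiples e) :
    c ∈ Γ ∨ ∃ a : ℤ, IsCoprime a p ∧ a • c - e ∈ Γ := by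
  obtain ⟨γ, hγ, _, ⟨k, rfl⟩, rfl⟩ := mem_sup.1 hc
  by_cases hpk : (p : ℤ) ∣ k
  · obtain ⟨m, rfl⟩ := hpk
    refine .inl (add_mem hγ ?_)
    simpa [mul_comm, mul_zsmul] using zsmul_mem hpe m
  · obtain ⟨a, b, hab⟩ : IsCoprime k p :=
      (((Nat.prime_iff_prime_int.1 hp).irreducible.coprime_iff_not_dvd).2 hpk).symm
    refine .inr ⟨a, ⟨k, b, by rw [← hab, mul_comm k]⟩, ?_⟩
    have : a • (γ + k • e) - e = a • γ - b • (p : ℤ) • e := by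
      rw [← sub_eq_zero, ← sub_eq_zero.2 (congrArg (· • e) hab)]
      module
    rw [this, natCast_zsmul]
    exact sub_mem (zsmul_mem hγ a) (zsmul_mem hpe b)

theorem Respects.sup_zmultiples {p : ℕ} (hp : p.Prime) (hΓ : Respects Γ H H') {e : A × B}
    (hpe : p • e ∈ Γ) (he : ∀ d ∈ Γ, e.1 + d.1 ∈ H ↔ e.2 + d.2 ∈ H') :
    Respects (Γ ⊔ zmultiples e) H H' := by
  intro c hc
  rcases mem_or_exists_isCoprime_zsmul_sub_mem hp hpe hc with hc' | ⟨a, ha, hac⟩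
  · exact hΓ c hc'
  have hcoset : a • c.1 ∈ H ↔ a • c.2 ∈ H' := by simpa using he _ hac
  have hpc : (p : ℤ) • c.1 ∈ H ↔ (p : ℤ) • c.2 ∈ H' := by
    simpa using hΓ _ (nsmul_mem_of_mem_sup_zmultiples hpe hc)
  rw [mem_iff_zsmul_mem_and_zsmul_mem ha, hcoset, hpc, ← mem_iff_zsmul_mem_and_zsmul_mem ha]

end Counting

section HeightIso

variable {A B : Type*} [AddCommGroup A] [AddCommGroup B] {Γ : AddSubgroup (A × B)} {p : ℕ}
  {θ : WithTop Ordinal.{0}}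

/-- `Γ` is the graph of an isomorphism between finite subgroups of `A` and `B` that preserves
heights, measured in `A` and in `B`, at every prime. -/
structure IsHeightIso (Γ : AddSubgroup (A × B)) : Prop where
  finite : Finite Γ
  respects_bot : Respects Γ ⊥ ⊥
  respects_heightGE {p : ℕ} (hp : p.Prime) (θ : WithTop Ordinal.{0}) :
    Respects Γ (heightGE A p θ) (heightGE B p θ)

namespace IsHeightIso

theorem bot : IsHeightIso (⊥ : AddSubgroup (A × B)) where
  finite := inferInstance
  respects_bot _ hc := by simp [mem_bot.1 hc]
  respects_heightGE _ _ _ hc := by simp [mem_bot.1 hc, zero_mem]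

theorem swap (hΓ : IsHeightIso Γ) :
    IsHeightIso (Γ.comap (AddEquiv.prodComm (M := B) (N := A) : B × A →+ A × B)) where
  finite :=
    have := hΓ.finite
    Finite.of_injective (fun c ↦ (⟨c.1.swap, c.2⟩ : Γ)) fun _ _ h ↦
      Subtype.ext (Prod.swap_injective (congrArg Subtype.val h))
  respects_bot _ hc := (hΓ.respects_bot _ hc).symm
  respects_heightGE hp θ _ hc := (hΓ.respects_heightGE hp θ _ hc).symm

theorem sup_zmultiples (hΓ : IsHeightIso Γ) (hp : p.Prime) {e : A × B} (hpe : p • e ∈ Γ)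
    (hA : e.1 ∈ heightGE A p θ) (hB : e.2 ∈ heightGE B p θ)
    (hΓA : ∀ c ∈ Γ, e.1 + c.1 ∉ heightGT A p θ) (hΓB : ∀ c ∈ Γ, e.2 + c.2 ∉ heightGT B p θ) :
    IsHeightIso (Γ ⊔ zmultiples e) where
  finite := by
    have := hΓ.finite
    have he : IsOfFinAddOrder e := by
      have : IsOfFinAddOrder (p • e) :=
        Γ.subtype.isOfFinAddOrder (isOfFinAddOrder_of_finite (⟨p • e, hpe⟩ : Γ))
      exact (isOfFinAddOrder_nsmul.1 this).resolve_right hp.ne_zero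
    have : Finite (zmultiples e) := finite_zmultiples.2 he
    have hcoe := add_normal Γ (zmultiples e)
    exact (hcoe ▸ Set.Finite.add (Set.toFinite _) (Set.toFinite _) :)
  respects_bot := hΓ.respects_bot.sup_zmultiples hp hpe fun d hd ↦
    iff_of_false (fun h ↦ hΓA d hd (mem_bot.1 h ▸ zero_mem _))
      (fun h ↦ hΓB d hd (mem_bot.1 h ▸ zero_mem _))
  respects_heightGE {q} hq β := by
    rcases eq_or_ne p q with rfl | hpq
    · refine (hΓ.respects_heightGE hp β).sup_zmultiples hp hpe fun d hd ↦ ?_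
      rcases le_or_gt β θ with hβ | hβ
      · rw [add_mem_cancel_left (heightGE_antitone hβ hA),
          add_mem_cancel_left (heightGE_antitone hβ hB)]
        exact hΓ.respects_heightGE hp β d hd
      · exact iff_of_false (fun h ↦ hΓA d hd (heightGE_le_heightGT hβ h))
          (fun h ↦ hΓB d hd (heightGE_le_heightGT hβ h))
    · intro c hc
      have hcop := (Nat.coprime_primes hp hq).2 hpq
      rw [← nsmul_mem_heightGE_iff hcop, ← nsmul_mem_heightGE_iff (x := c.2) hcop]
      exact hΓ.respects_heightGE hq β _ (nsmul_mem_of_mem_sup_zmultiples hpe hc)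

end IsHeightIso

theorem mem_heightGT_sup_iff {x : A} :
    x ∈ heightGT A p θ ⊔ heightGE A p θ ⊓ torsionBy A p ↔
      x ∈ heightGE A p θ ∧ p • x ∈ p • heightGT A p θ := by
  constructor
  · intro hx
    obtain ⟨v, hv, u, hu, rfl⟩ := mem_sup.1 hx
    refine ⟨add_mem (heightGT_le_heightGE hv) hu.1, v, hv, ?_⟩
    simp [torsionBy.nsmul_iff.1 hu.2]
  · rintro ⟨hx, v, hv, hvx⟩
    refine mem_sup.2 ⟨v, hv, x - v, mem_inf.2 ⟨sub_mem hx (heightGT_le_heightGE hv), ?_⟩, by abel⟩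
    rw [torsionBy.nsmul_iff, nsmul_sub, sub_eq_zero]
    exact hvx.symm

namespace IsHeightIso

variable [Small.{0} A] [Small.{0} B]

theorem respects_smul_heightGE (hΓ : IsHeightIso Γ) (hp : p.Prime) (θ : WithTop Ordinal.{0}) :
    Respects Γ (p • heightGE A p θ) (p • heightGE B p θ) := by
  rw [smul_heightGE, smul_heightGE]
  exact hΓ.respects_heightGE hp _

theorem respects_heightGT (hΓ : IsHeightIso Γ) (hp : p.Prime) (θ : WithTop Ordinal.{0}) :
    Respects Γ (heightGT A p θ) (heightGT B p θ) := by
  rcases eq_or_ne θ ⊤ with rfl | hθ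
  · rw [heightGT_top, heightGT_top]
    exact hΓ.respects_bot
  · rw [heightGT_of_ne_top hθ, heightGT_of_ne_top hθ]
    exact hΓ.respects_smul_heightGE hp θ

theorem respects_smul_heightGT (hΓ : IsHeightIso Γ) (hp : p.Prime) (θ : WithTop Ordinal.{0}) :
    Respects Γ (p • heightGT A p θ) (p • heightGT B p θ) := by
  rcases eq_or_ne θ ⊤ with rfl | hθ
  · simpa [heightGT_top, pointwise_smul_def] using hΓ.respects_bot
  · simp only [heightGT_of_ne_top hθ, smul_heightGE]
    exact hΓ.respects_heightGE hp _

theorem relIndex_heightGT_sup_map (hΓ : IsHeightIso Γ) (hp : p.Prime)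
    (h : ulmInvariant A p θ = ulmInvariant B p θ) :
    (heightGT A p θ ⊔ Γ.map (AddMonoidHom.fst A B)).relIndex (heightGE A p θ ⊓ torsionBy A p) =
      (heightGT B p θ ⊔ Γ.map (AddMonoidHom.snd A B)).relIndex
        (heightGE B p θ ⊓ torsionBy B p) := by
  have := hΓ.finite
  refine (hΓ.respects_heightGT hp θ).relIndex_sup_map (fun c hc ↦ ?_) h
  rw [mem_heightGT_sup_iff, mem_heightGT_sup_iff]
  exact and_congr (hΓ.respects_heightGE hp θ c hc)
    (hΓ.respects_smul_heightGT hp θ _ (nsmul_mem hc p))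

theorem exists_nsmul_eq_of_mem_smul_heightGT (hΓ : IsHeightIso Γ) (hp : p.Prime)
    (h : ulmInvariant A p θ = ulmInvariant B p θ) {x : A} {b : B} (hxb : (p • x, b) ∈ Γ)
    (hx : x ∈ heightGE A p θ) (hΓx : ∀ c ∈ Γ, x + c.1 ∉ heightGT A p θ)
    (hpx : p • x ∈ p • heightGT A p θ) :
    ∃ w ∈ heightGE B p θ, p • w = b ∧ ∀ c ∈ Γ, w + c.2 ∉ heightGT B p θ := by
  obtain ⟨v, hv, hvx : p • v = p • x⟩ := hpx
  obtain ⟨v', hv', hvb : p • v' = b⟩ : b ∈ p • heightGT B p θ :=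
    (hΓ.respects_smul_heightGT hp θ _ hxb).1 ⟨v, hv, hvx⟩
  have hA : ¬heightGE A p θ ⊓ torsionBy A p ≤ heightGT A p θ ⊔ Γ.map (AddMonoidHom.fst A B) := by
    intro hle
    have hxv : x - v ∈ heightGE A p θ ⊓ torsionBy A p :=
      mem_inf.2 ⟨sub_mem hx (heightGT_le_heightGE hv),
        torsionBy.nsmul_iff.2 (by simp [nsmul_sub, hvx])⟩
    obtain ⟨y, hy, _, ⟨c, hc, rfl⟩, hyc : y + c.1 = x - v⟩ := mem_sup.1 (hle hxv)
    refine hΓx (-c) (neg_mem hc) ?_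
    have : x + (-c).1 = y + v := by
      rw [Prod.fst_neg, ← sub_eq_add_neg, sub_eq_iff_eq_add, add_right_comm, hyc, sub_add_cancel]
    exact this ▸ add_mem hy hv
  obtain ⟨u, ⟨hu, hpu⟩, huΓ⟩ : ∃ u ∈ heightGE B p θ ⊓ torsionBy B p,
      u ∉ heightGT B p θ ⊔ Γ.map (AddMonoidHom.snd A B) := by
    rwa [← SetLike.not_le_iff_exists, ← relIndex_eq_one, ← hΓ.relIndex_heightGT_sup_map hp h,
      relIndex_eq_one]
  refine ⟨u + v', add_mem hu (heightGT_le_heightGE hv'), ?_, fun c hc hcu ↦ huΓ ?_⟩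
  · rw [nsmul_add, torsionBy.nsmul_iff.1 hpu, zero_add, hvb]
  · refine mem_sup.2 ⟨_, sub_mem hcu hv', _, neg_mem (mem_map_of_mem _ hc), ?_⟩
    simp [add_right_comm u v']

theorem exists_nsmul_eq_of_forall_notMem_smul_heightGT (hΓ : IsHeightIso Γ) (hp : p.Prime)
    {x : A} {b : B} (hxb : (p • x, b) ∈ Γ) (hx : x ∈ heightGE A p θ)
    (hpx : ∀ c ∈ Γ, x + c.1 ∈ heightGE A p θ → p • (x + c.1) ∉ p • heightGT A p θ) :
    ∃ w ∈ heightGE B p θ, p • w = b ∧ ∀ c ∈ Γ, w + c.2 ∉ heightGT B p θ := by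
  obtain ⟨w, hw, rfl⟩ : b ∈ p • heightGE B p θ :=
    (hΓ.respects_smul_heightGE hp θ _ hxb).1 (smul_mem_pointwise_smul x p _ hx)
  refine ⟨w, hw, rfl, fun c hc hwc ↦ ?_⟩
  have hcB : c.2 ∈ heightGE B p θ := (add_mem_cancel_left hw).1 (heightGT_le_heightGE hwc)
  have hcA : c.1 ∈ heightGE A p θ := (hΓ.respects_heightGE hp θ c hc).2 hcB
  refine hpx c hc (add_mem hx hcA) ?_
  rw [nsmul_add]
  refine (hΓ.respects_smul_heightGT hp θ _ (add_mem hxb (nsmul_mem hc p))).2 ?_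
  exact ⟨w + c.2, hwc, nsmul_add w c.2 p⟩

theorem exists_proper_partner (hΓ : IsHeightIso Γ) (hp : p.Prime)
    (h : ulmInvariant A p θ = ulmInvariant B p θ) {x : A} {b : B} (hxb : (p • x, b) ∈ Γ)
    (hx : x ∈ heightGE A p θ) (hΓx : ∀ c ∈ Γ, x + c.1 ∉ heightGT A p θ) :
    ∃ d ∈ Γ, ∃ w, x + d.1 ∈ heightGE A p θ ∧ w ∈ heightGE B p θ ∧ (p • (x + d.1), p • w) ∈ Γ ∧
      ∀ c ∈ Γ, w + c.2 ∉ heightGT B p θ := by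
  by_cases hpx : ∃ d ∈ Γ, x + d.1 ∈ heightGE A p θ ∧ p • (x + d.1) ∈ p • heightGT A p θ
  · obtain ⟨d, hd, hxd, hpxd⟩ := hpx
    have hxdb : (p • (x + d.1), b + p • d.2) ∈ Γ := by
      rw [nsmul_add]
      exact add_mem hxb (nsmul_mem hd p)
    have hΓxd (c) (hc : c ∈ Γ) : x + d.1 + c.1 ∉ heightGT A p θ :=
      add_assoc x _ _ ▸ hΓx _ (add_mem hd hc)
    obtain ⟨w, hw, hpw, hΓw⟩ :=
      hΓ.exists_nsmul_eq_of_mem_smul_heightGT hp h hxdb hxd hΓxd hpxd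
    exact ⟨d, hd, w, hxd, hw, hpw ▸ hxdb, hΓw⟩
  · push Not at hpx
    obtain ⟨w, hw, hpw, hΓw⟩ :=
      hΓ.exists_nsmul_eq_of_forall_notMem_smul_heightGT hp hxb hx hpx
    exact ⟨0, zero_mem Γ, w, by simpa using hx, hw, by simpa [hpw] using hxb, hΓw⟩

theorem exists_le_mem_of_prime_nsmul (hΓ : IsHeightIso Γ) (hp : p.Prime)
    (h : ∀ θ, ulmInvariant A p θ = ulmInvariant B p θ) {x : A} {b : B} (hxb : (p • x, b) ∈ Γ) :
    ∃ Γ' ≥ Γ, IsHeightIso Γ' ∧ ∃ y, (x, y) ∈ Γ' := by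
  have := hΓ.finite
  by_cases hx : x ∈ Γ.map (AddMonoidHom.fst A B)
  · obtain ⟨c, hc, rfl⟩ := hx
    exact ⟨Γ, le_rfl, hΓ, c.2, hc⟩
  have : Finite (Γ.map (AddMonoidHom.fst A B)) :=
    Set.Finite.image _ (Set.toFinite (Γ : Set (A × B)))
  obtain ⟨θ, _, ⟨d, hd, rfl⟩, hxd, hproper⟩ := exists_add_mem_heightGE_of_notMem p _ hx
  have hΓxd (c) (hc : c ∈ Γ) : x + d.1 + c.1 ∉ heightGT A p θ := by
    rw [add_assoc]
    exact hproper _ ⟨d + c, add_mem hd hc, rfl⟩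
  have hxdb : (p • (x + d.1), b + p • d.2) ∈ Γ := by
    rw [nsmul_add]
    exact add_mem hxb (nsmul_mem hd p)
  obtain ⟨d', hd', w, hA, hB, hpe, hΓw⟩ := hΓ.exists_proper_partner hp (h θ) hxdb hxd hΓxd
  let e : A × B := (x + d.1 + d'.1, w)
  have hΓe (c) (hc : c ∈ Γ) : e.1 + c.1 ∉ heightGT A p θ :=
    add_assoc (x + d.1) _ _ ▸ hΓxd _ (add_mem hd' hc)
  have hxe : e - (d + d') = (x, w - (d.2 + d'.2)) := Prod.ext (by simp [e, add_assoc]) rfl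
  have hmem : e - (d + d') ∈ Γ ⊔ zmultiples e :=
    sub_mem (mem_sup_right (mem_zmultiples e)) (mem_sup_left (add_mem hd hd'))
  rw [hxe] at hmem
  exact ⟨_, le_sup_left, hΓ.sup_zmultiples hp (e := e) hpe hA hB hΓe hΓw, _, hmem⟩

theorem exists_le_mem_of_nsmul (hΓ : IsHeightIso Γ)
    (h : ∀ p, p.Prime → ∀ θ, ulmInvariant A p θ = ulmInvariant B p θ) {n : ℕ} (hn : n ≠ 0)
    {x : A} {b : B} (hxb : (n • x, b) ∈ Γ) :
    ∃ Γ' ≥ Γ, IsHeightIso Γ' ∧ ∃ y, (x, y) ∈ Γ' := by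
  induction n using induction_on_primes generalizing Γ b with
  | zero => exact absurd rfl hn
  | one => exact ⟨Γ, le_rfl, hΓ, b, one_nsmul x ▸ hxb⟩
  | prime_mul p m hp ih =>
    obtain ⟨Γ₁, hΓΓ₁, hΓ₁, y, hy⟩ :=
      hΓ.exists_le_mem_of_prime_nsmul hp (h p hp) (mul_nsmul' x p m ▸ hxb)
    obtain ⟨Γ₂, hΓ₁Γ₂, hΓ₂⟩ := ih hΓ₁ (right_ne_zero_of_mul hn) hy
    exact ⟨Γ₂, hΓΓ₁.trans hΓ₁Γ₂, hΓ₂⟩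

theorem exists_le_mem_fst (hΓ : IsHeightIso Γ)
    (h : ∀ p, p.Prime → ∀ θ, ulmInvariant A p θ = ulmInvariant B p θ) {x : A}
    (hx : IsOfFinAddOrder x) : ∃ Γ' ≥ Γ, IsHeightIso Γ' ∧ ∃ y, (x, y) ∈ Γ' :=
  hΓ.exists_le_mem_of_nsmul h hx.addOrderOf_pos.ne' (b := 0)
    (by rw [addOrderOf_nsmul_eq_zero]; exact zero_mem Γ)

theorem exists_le_mem_snd (hΓ : IsHeightIso Γ)
    (h : ∀ p, p.Prime → ∀ θ, ulmInvariant A p θ = ulmInvariant B p θ) {y : B}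
    (hy : IsOfFinAddOrder y) : ∃ Γ' ≥ Γ, IsHeightIso Γ' ∧ ∃ x, (x, y) ∈ Γ' := by
  obtain ⟨Γ', hle, hΓ', x, hx⟩ := hΓ.swap.exists_le_mem_fst (fun p hp θ ↦ (h p hp θ).symm) hy
  exact ⟨_, fun c hc ↦ hle (x := c.swap) hc, hΓ'.swap, x, hx⟩

end IsHeightIso

end HeightIso

section BackAndForth

variable {A B : Type*} [AddCommGroup A] [AddCommGroup B]

theorem nonempty_addEquiv_of_respects_bot {G : AddSubgroup (A × B)} (hG : Respects G ⊥ ⊥)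
    (hfst : ∀ x, ∃ y, (x, y) ∈ G) (hsnd : ∀ y, ∃ x, (x, y) ∈ G) : Nonempty (A ≃+ B) := by
  have hinj₁ : Function.Injective (Prod.fst ∘ G.subtype) := by
    refine (injective_iff_map_eq_zero ((AddMonoidHom.fst A B).comp G.subtype)).2 fun c hc ↦ ?_
    exact Subtype.ext (Prod.ext hc ((hG c c.2).1 hc))
  have hinj₂ : Function.Injective (Prod.snd ∘ G.subtype) := by
    refine (injective_iff_map_eq_zero ((AddMonoidHom.snd A B).comp G.subtype)).2 fun c hc ↦ ?_
    exact Subtype.ext (Prod.ext ((hG c c.2).2 hc) hc)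
  obtain ⟨e, -⟩ := exists_addEquiv_eq_graph
    ⟨hinj₁, fun x ↦ have ⟨y, h⟩ := hfst x; ⟨⟨(x, y), h⟩, rfl⟩⟩
    ⟨hinj₂, fun y ↦ have ⟨x, h⟩ := hsnd y; ⟨⟨(x, y), h⟩, rfl⟩⟩
  exact ⟨e⟩

theorem nonempty_addEquiv_of_back_and_forth [Countable A] [Countable B]
    {P : AddSubgroup (A × B) → Prop} (hbot : P ⊥) (hgraph : ∀ Γ, P Γ → Respects Γ ⊥ ⊥)
    (forth : ∀ Γ, P Γ → ∀ x, ∃ Γ' ≥ Γ, P Γ' ∧ ∃ y, (x, y) ∈ Γ')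
    (back : ∀ Γ, P Γ → ∀ y, ∃ Γ' ≥ Γ, P Γ' ∧ ∃ x, (x, y) ∈ Γ') : Nonempty (A ≃+ B) := by
  let 𝒟 : A ⊕ B → Order.Cofinal {Γ // P Γ} := Sum.elim
    (fun x ↦ ⟨{Γ | ∃ y, (x, y) ∈ Γ.1}, fun Γ ↦
      have ⟨Γ', hle, hP, hx⟩ := forth Γ Γ.2 x
      ⟨⟨Γ', hP⟩, hx, hle⟩⟩)
    (fun y ↦ ⟨{Γ | ∃ x, (x, y) ∈ Γ.1}, fun Γ ↦
      have ⟨Γ', hle, hP, hy⟩ := back Γ Γ.2 y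
      ⟨⟨Γ', hP⟩, hy, hle⟩⟩)
  have := Encodable.ofCountable (A ⊕ B)
  let I := Order.idealOfCofinals ⟨⊥, hbot⟩ 𝒟
  have : Nonempty I := I.nonempty.to_subtype
  have hdir : Directed (· ≤ ·) fun Γ : I ↦ Γ.1.1 := fun Γ₁ Γ₂ ↦
    have ⟨Γ, hΓ, h₁, h₂⟩ := I.directed Γ₁ Γ₁.2 Γ₂ Γ₂.2
    ⟨⟨Γ, hΓ⟩, h₁, h₂⟩
  have hmem {c : A × B} : c ∈ ⨆ Γ : I, Γ.1.1 ↔ ∃ Γ : I, c ∈ Γ.1.1 := mem_iSup_of_directed hdir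
  refine nonempty_addEquiv_of_respects_bot (G := ⨆ Γ : I, Γ.1.1) (fun c hc ↦ ?_) (fun x ↦ ?_)
    fun y ↦ ?_
  · obtain ⟨Γ, hΓ⟩ := hmem.1 hc
    exact hgraph _ Γ.1.2 c hΓ
  · obtain ⟨Γ, ⟨y, hy⟩, hΓ⟩ := Order.cofinal_meets_idealOfCofinals ⟨⊥, hbot⟩ 𝒟 (.inl x)
    exact ⟨y, hmem.2 ⟨⟨Γ, hΓ⟩, hy⟩⟩
  · obtain ⟨Γ, ⟨x, hx⟩, hΓ⟩ := Order.cofinal_meets_idealOfCofinals ⟨⊥, hbot⟩ 𝒟 (.inr y)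
    exact ⟨x, hmem.2 ⟨⟨Γ, hΓ⟩, hx⟩⟩

theorem nonempty_addEquiv_of_ulmInvariant_eq [Countable A] [Countable B] (hA : IsAddTorsion A)
    (hB : IsAddTorsion B) (h : ∀ p, p.Prime → ∀ θ, ulmInvariant A p θ = ulmInvariant B p θ) :
    Nonempty (A ≃+ B) :=
  nonempty_addEquiv_of_back_and_forth IsHeightIso.bot (fun _ hΓ ↦ hΓ.respects_bot)
    (fun _ hΓ x ↦ hΓ.exists_le_mem_fst h (hA x)) (fun _ hΓ y ↦ hΓ.exists_le_mem_snd h (hB y))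

end BackAndForth

end Ulm

theorem cancel_pow_two_of_countable_torsion_general {ι : Type*} [Finite ι] [Nonempty ι]
    (A B : Type*) [AddCommGroup A] [AddCommGroup B] [Countable A] (hA : IsAddTorsion A)
    (h : Nonempty ((ι → A) ≃+ (ι → B))) :
    Nonempty (A ≃+ B) := by
  obtain ⟨e⟩ := h
  have := Fintype.ofFinite ι
  let i : ι := Classical.arbitrary ι
  let f : (ι → A) →+ B := (Pi.evalAddMonoidHom (fun _ ↦ B) i).comp e
  have hf : Function.Surjective f := (Function.surjective_eval i).comp e.surjective
  have : Countable B := hf.countable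
  have hpi : IsAddTorsion (ι → A) := fun x ↦ .pi fun i ↦ hA (x i)
  have hB : IsAddTorsion B := hpi.of_surjective hf
  refine Ulm.nonempty_addEquiv_of_ulmInvariant_eq hA hB fun p _ θ ↦ ?_
  refine Nat.pow_left_injective (Fintype.card_ne_zero (α := ι)) ?_
  change _ ^ _ = _ ^ _
  rw [← Ulm.ulmInvariant_pi, Ulm.ulmInvariant_congr e, Ulm.ulmInvariant_pi]

/-- If `A` and `B` are countable torsion abelian groups and the direct sum of `2^n`
copies of `A` is isomorphic to the direct sum of `2^n` copies of `B` (for some `n ≥ 1`),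
then `A ≅ B`. -/
theorem cancel_pow_two_of_countable_torsion
    (A B : Type*) [AddCommGroup A] [AddCommGroup B] [Countable A] [Countable B]
    (hA : AddMonoid.IsTorsion A) (hB : AddMonoid.IsTorsion B)
    (n : ℕ) (hn : 1 ≤ n)
    (h : Nonempty ((Fin (2 ^ n) → A) ≃+ (Fin (2 ^ n) → B))) :
    Nonempty (A ≃+ B) :=
  cancel_pow_two_of_countable_torsion_general A B hA h
end

section
/- Let Γ be a group and let φ : Γ → ℤ/2 * ℤ/2 be a surjective group homomorphism onto the free product of two copies of ℤ/2, with a and b denoting the images in ℤ/2 * ℤ/2 of the generators of the two free factors. Set F = ker φ, G_0 = φ^{-1}(⟨a⟩) and G_1 = φ^{-1}(⟨b⟩). Then F has index 2 in both G_0 and G_1, Γ is generated by G_0 ∪ G_1, and the canonical homomorphism from the amalgamated free product G_0 *_F G_1 (the pushout of the inclusions F ↪ G_0 and F ↪ G_1 in the category of groups) to Γ is an isomorphism. -/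
open Monoid

/-- The infinite dihedral group `D_∞ = ℤ/2 * ℤ/2`, the free product of two copies
of `ℤ/2`. -/
abbrev DInf : Type := Coprod (Multiplicative (ZMod 2)) (Multiplicative (ZMod 2))

/-- The image `a` of the generator of the first free factor. -/
def genA : DInf := Coprod.inl (Multiplicative.ofAdd (1 : ZMod 2))

/-- The image `b` of the generator of the second free factor. -/
def genB : DInf := Coprod.inr (Multiplicative.ofAdd (1 : ZMod 2))

variable {Γ : Type*} [Group Γ] (φ : Γ →* DInf)

/-- `G₀ = φ⁻¹⟨a⟩`. -/
def Gzero : Subgroup Γ := (Subgroup.zpowers genA).comap φ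

/-- `G₁ = φ⁻¹⟨b⟩`. -/
def Gone : Subgroup Γ := (Subgroup.zpowers genB).comap φ

lemma ker_le_Gzero : φ.ker ≤ Gzero φ := fun x hx => by
  simp only [Gzero, Subgroup.mem_comap, MonoidHom.mem_ker.mp hx]; exact one_mem _

lemma ker_le_Gone : φ.ker ≤ Gone φ := fun x hx => by
  simp only [Gone, Subgroup.mem_comap, MonoidHom.mem_ker.mp hx]; exact one_mem _

/-- The family `i ↦ G_i` indexed by `Bool` (with `true ↦ G₀`, `false ↦ G₁`). -/
def Gfam : Bool → Subgroup Γ := fun i => if i then Gzero φ else Gone φ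

lemma ker_le_Gfam : ∀ i : Bool, φ.ker ≤ Gfam φ i := by
  intro i
  cases i
  · exact ker_le_Gone φ
  · exact ker_le_Gzero φ

/-- The inclusions `F = ker φ → G_i`. -/
def inclFam : ∀ i : Bool, φ.ker →* (Gfam φ i) := fun i =>
  Subgroup.inclusion (ker_le_Gfam φ i)

/-- The canonical homomorphism from the amalgamated free product `G₀ *_F G₁`
(the pushout of the inclusions `F ↪ G₀` and `F ↪ G₁` in the category of groups)
to `Γ`. -/
def canonicalHom : PushoutI (inclFam φ) →* Γ :=
  PushoutI.lift (fun i => (Gfam φ i).subtype) φ.ker.subtype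
    (fun i => Subgroup.subtype_comp_inclusion (ker_le_Gfam φ i))

/-!
If `N` is normal in every `Gᵢ`, the kernel of the projection from the amalgamated product `*_N Gᵢ`
to the free product of the `Gᵢ / N` is exactly `N`: a normal form with at least one letter outside
`N` maps to a nonempty reduced word. For subgroups `Hᵢ ≥ ker f` whose images under `f : Γ → Q`
generate their free product in `Q`, the square
```
*_{ker f} Hᵢ ⟶ * f(Hᵢ)
      ↓           ↓
      Γ    ⟶    Q
```
therefore shows that an element of the pushout which dies in `Γ` lies in `ker f`, on which the left
map is injective. In `ℤ/2 * ℤ/2` the images are the two free factors.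
-/

section FreeProduct

variable {ι : Type*} {G A : ι → Type*} [∀ i, Monoid (G i)] [∀ i, Monoid (A i)]

lemma coprodI_word_eq_empty_of_lift_prod_eq_one (ψ : ∀ i, G i →* A i) (w : CoprodI.Word G)
    (hw : ∀ l ∈ w.toList, ψ l.1 l.2 ≠ 1)
    (h : CoprodI.lift (fun i => CoprodI.of.comp (ψ i)) w.prod = 1) : w = .empty := by
  classical
  let image : CoprodI.Word A :=
    { toList := w.toList.map fun l => ⟨l.1, ψ l.1 l.2⟩
      ne_one := List.forall_mem_map.mpr hw
      chain_ne := (List.isChain_map _).mpr w.chain_ne }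
  have prod_image : image.prod = 1 := by
    rw [← h]
    simp [image, CoprodI.Word.prod, map_list_prod, Function.comp_def]
  have image_eq : image = .empty := CoprodI.Word.equiv.symm.injective prod_image
  exact CoprodI.Word.ext (List.map_eq_nil_iff.mp (congrArg CoprodI.Word.toList image_eq))

end FreeProduct

section Pushout

variable {ι N : Type*} {G A : ι → Type*} [Group N] [∀ i, Group (G i)] [∀ i, Monoid (A i)]
  {incl : ∀ i, N →* G i}

lemma reduced_of_normalWord {d : PushoutI.NormalWord.Transversal incl}
    (w : PushoutI.NormalWord d) : PushoutI.Reduced incl w.toWord := by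
  rintro ⟨i, g⟩ hg hN
  have factorizations_eq := (d.compl i).1 (a₁ := (1, ⟨g, w.normalized i g hg⟩))
    (a₂ := (⟨g, hN⟩, ⟨1, d.one_mem i⟩)) (by simp)
  have g_eq_one : g = 1 := congrArg (fun p => (p.2 : G i)) factorizations_eq
  exact w.ne_one _ hg g_eq_one

lemma exists_base_mul_reduced (hincl : ∀ i, Function.Injective (incl i)) (x : PushoutI incl) :
    ∃ (n : N) (w : CoprodI.Word G), PushoutI.Reduced incl w ∧
      x = PushoutI.base incl n * PushoutI.ofCoprodI w.prod := by
  classical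
  obtain ⟨d⟩ := PushoutI.NormalWord.transversal_nonempty incl hincl
  let w : PushoutI.NormalWord d := PushoutI.NormalWord.equiv x
  exact ⟨w.head, w.toWord, reduced_of_normalWord w,
    (PushoutI.NormalWord.equiv.symm_apply_apply x).symm⟩

/-- The homomorphism `*_N Gᵢ → * Aᵢ` induced by homomorphisms `Gᵢ → Aᵢ` that are trivial on `N`.
When `Aᵢ = Gᵢ / N`, it is the quotient of the amalgamated product by its base. -/
def pushoutToCoprodI (ψ : ∀ i, G i →* A i) (hψ : ∀ i, (ψ i).comp (incl i) = 1) :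
    PushoutI incl →* CoprodI A :=
  PushoutI.lift (fun i => CoprodI.of.comp (ψ i)) 1 fun i => by
    rw [MonoidHom.comp_assoc, hψ, MonoidHom.comp_one]

lemma ker_pushoutToCoprodI (hincl : ∀ i, Function.Injective (incl i)) (ψ : ∀ i, G i →* A i)
    (hψ : ∀ i, (ψ i).comp (incl i) = 1) (hker : ∀ i, (ψ i).ker ≤ (incl i).range) :
    (pushoutToCoprodI ψ hψ).ker = (PushoutI.base incl).range := by
  have map_base (n : N) : pushoutToCoprodI ψ hψ (PushoutI.base incl n) = 1 :=
    PushoutI.lift_base _ _ _ n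
  have map_word : (pushoutToCoprodI ψ hψ).comp PushoutI.ofCoprodI =
      CoprodI.lift fun i => CoprodI.of.comp (ψ i) := by
    ext i g
    simp [pushoutToCoprodI]
  refine le_antisymm (fun x hx => ?_) ?_
  · obtain ⟨n, w, hw, rfl⟩ := exists_base_mul_reduced hincl x
    rw [MonoidHom.mem_ker, map_mul, map_base, one_mul, ← MonoidHom.comp_apply, map_word] at hx
    have w_eq : w = .empty :=
      coprodI_word_eq_empty_of_lift_prod_eq_one ψ w (fun l hl h => hw l hl (hker l.1 h)) hx
    exact ⟨n, by simp [w_eq]⟩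
  · rintro _ ⟨n, rfl⟩
    exact map_base n

end Pushout

section Preimages

variable {G Q : Type*} [Group G] [Group Q] (f : G →* Q)

lemma pushoutI_lift_subtype_injective_of_map_free {ι : Type*} (H : ι → Subgroup G)
    (hH : ∀ i, f.ker ≤ H i)
    (hfree : Function.Injective (CoprodI.lift fun i => ((H i).map f).subtype)) :
    Function.Injective (PushoutI.lift (φ := fun i => Subgroup.inclusion (hH i))
      (fun i => (H i).subtype) f.ker.subtype
      fun i => Subgroup.subtype_comp_inclusion (hH i)) := by
  set incl := fun i => Subgroup.inclusion (hH i)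
  set canonical := PushoutI.lift (φ := incl) (fun i => (H i).subtype) f.ker.subtype _
  have comp_incl (i : ι) : (f.subgroupMap (H i)).comp (incl i) = 1 := by
    ext n
    exact n.2
  have ker_le (i : ι) : (f.subgroupMap (H i)).ker ≤ (incl i).range := by
    rw [Subgroup.ker_subgroupMap, Subgroup.inclusion_range]
  let quotient := pushoutToCoprodI (fun i => f.subgroupMap (H i)) comp_incl
  have square : (CoprodI.lift fun i => ((H i).map f).subtype).comp quotient =
      f.comp canonical := by
    refine PushoutI.hom_ext (fun i => ?_) ?_
    · ext g
      simp [quotient, canonical, pushoutToCoprodI]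
    · ext n
      simpa [quotient, canonical, pushoutToCoprodI] using n.2.symm
  rw [injective_iff_map_eq_one]
  intro x hx
  have hquot : quotient x = 1 := by
    apply hfree
    rw [← MonoidHom.comp_apply, square, MonoidHom.comp_apply, hx, map_one, map_one]
  obtain ⟨n, rfl⟩ : x ∈ (PushoutI.base incl).range := by
    rwa [← ker_pushoutToCoprodI (fun i => Subgroup.inclusion_injective (hH i)) _ comp_incl ker_le]
  have hn : n = 1 := Subtype.ext ((PushoutI.lift_base _ _ _ n).symm.trans hx)
  rw [hn, map_one]

lemma relIndex_ker_comap_zpowers (hf : Function.Surjective f) (q : Q) :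
    f.ker.relIndex ((Subgroup.zpowers q).comap f) = orderOf q := by
  rw [← MonoidHom.comap_bot, Subgroup.relIndex_comap, Subgroup.map_comap_eq_self_of_surjective hf,
    Subgroup.relIndex_bot_left, Nat.card_zpowers]

end Preimages

lemma coprodI_lift_subtype_injective_of_eq_range {A B : Type*} [Group A] [Group B]
    (K : Bool → Subgroup (Coprod A B)) (hinl : K true = (Coprod.inl : A →* Coprod A B).range)
    (hinr : K false = (Coprod.inr : B →* Coprod A B).range) :
    Function.Injective (CoprodI.lift fun i => (K i).subtype) := by
  let inverse : Coprod A B →* CoprodI fun i => K i :=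
    Coprod.lift
      ((CoprodI.of (i := true)).comp (Coprod.inl.codRestrict (K true) fun a => hinl ▸ ⟨a, rfl⟩))
      ((CoprodI.of (i := false)).comp (Coprod.inr.codRestrict (K false) fun b => hinr ▸ ⟨b, rfl⟩))
  have inverse_comp : inverse.comp (CoprodI.lift fun i => (K i).subtype) = .id _ := by
    refine CoprodI.ext_hom _ _ ?_
    rintro (_ | _)
    · ext ⟨g, hg⟩
      obtain ⟨b, rfl⟩ : g ∈ Coprod.inr.range := hinr ▸ hg
      simp [inverse]
    · ext ⟨g, hg⟩
      obtain ⟨a, rfl⟩ : g ∈ Coprod.inl.range := hinl ▸ hg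
      simp [inverse]
  exact Function.LeftInverse.injective (DFunLike.congr_fun inverse_comp)

section Cyclic

lemma zpowers_map_ofAdd_one {n : ℕ} {Q : Type*} [Group Q] (f : Multiplicative (ZMod n) →* Q) :
    Subgroup.zpowers (f (Multiplicative.ofAdd 1)) = f.range := by
  have generates : Subgroup.zpowers (Multiplicative.ofAdd (1 : ZMod n)) = ⊤ :=
    (Subgroup.eq_top_iff' _).mpr fun x => by
      obtain ⟨k, hk⟩ := ZMod.intCast_surjective x.toAdd
      exact ⟨k, Multiplicative.toAdd.injective (by simpa using hk)⟩
  rw [← MonoidHom.map_zpowers, generates, MonoidHom.range_eq_map]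

lemma orderOf_map_ofAdd_one {n : ℕ} {M : Type*} [Monoid M] {f : Multiplicative (ZMod n) →* M}
    (hf : Function.Injective f) : orderOf (f (Multiplicative.ofAdd 1)) = n := by
  rw [orderOf_injective f hf, orderOf_ofAdd_eq_addOrderOf, ZMod.addOrderOf_one]

end Cyclic

section DInf

lemma zpowers_genA : Subgroup.zpowers genA = Coprod.inl.range :=
  zpowers_map_ofAdd_one _

lemma zpowers_genB : Subgroup.zpowers genB = Coprod.inr.range :=
  zpowers_map_ofAdd_one _

lemma orderOf_genA : orderOf genA = 2 :=
  orderOf_map_ofAdd_one Coprod.inl_injective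

lemma orderOf_genB : orderOf genB = 2 :=
  orderOf_map_ofAdd_one Coprod.inr_injective

lemma Gzero_sup_Gone (hφ : Function.Surjective φ) : Gzero φ ⊔ Gone φ = ⊤ := by
  rw [Gzero, Gone, Subgroup.comap_sup_eq φ _ _ hφ, zpowers_genA, zpowers_genB,
    Coprod.range_inl_sup_range_inr, Subgroup.comap_top]

lemma canonicalHom_surjective (hφ : Function.Surjective φ) :
    Function.Surjective (canonicalHom φ) := by
  have Gfam_le (i : Bool) : Gfam φ i ≤ (canonicalHom φ).range := fun g hg =>
    ⟨PushoutI.of i ⟨g, hg⟩, PushoutI.lift_of (φ := inclFam φ) _ _ _ _⟩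
  rw [← MonoidHom.range_eq_top, eq_top_iff, ← Gzero_sup_Gone φ hφ]
  exact sup_le (Gfam_le true) (Gfam_le false)

lemma canonicalHom_injective (hφ : Function.Surjective φ) :
    Function.Injective (canonicalHom φ) := by
  refine pushoutI_lift_subtype_injective_of_map_free φ (Gfam φ) (ker_le_Gfam φ)
    (coprodI_lift_subtype_injective_of_eq_range _ ?_ ?_)
  · exact (Subgroup.map_comap_eq_self_of_surjective hφ _).trans zpowers_genA
  · exact (Subgroup.map_comap_eq_self_of_surjective hφ _).trans zpowers_genB

end DInf

/-- If `φ : Γ → ℤ/2 * ℤ/2` is an epimorphism with kernel `F`, and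
`G₀ = φ⁻¹⟨a⟩`, `G₁ = φ⁻¹⟨b⟩`, then `F` has index `2` in both `G₀` and `G₁`,
`Γ` is generated by `G₀ ∪ G₁`, and the canonical homomorphism
`G₀ *_F G₁ → Γ` is an isomorphism. -/
theorem canonicalHom_bijective (hφ : Function.Surjective φ) :
    ((φ.ker).subgroupOf (Gzero φ)).index = 2 ∧
    ((φ.ker).subgroupOf (Gone φ)).index = 2 ∧
    Gzero φ ⊔ Gone φ = ⊤ ∧
    Function.Bijective (canonicalHom φ) := by
  refine ⟨?_, ?_, Gzero_sup_Gone φ hφ, canonicalHom_injective φ hφ, canonicalHom_surjective φ hφ⟩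
  · exact (relIndex_ker_comap_zpowers φ hφ _).trans orderOf_genA
  · exact (relIndex_ker_comap_zpowers φ hφ _).trans orderOf_genB
end
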